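/- Let I ⊆ Δ be a subset with δ_I ≠ 0, let k and ℓ be nonzero integers, and set μ := (2k/ℓ)·δ_I. Then 2⟨δ, μ⟩ / ⟨μ, μ⟩ = ℓ/k. -/

import Mathlib

open scoped RealInnerProductSpace BigOperators

/-- A reduced crystallographic root system `Φ` in a real inner product space `E`,
together with a base (set of simple roots) `Δ`. -/
structure RootSystemBase (E : Type*) [NormedAddCommGroup E] [InnerProductSpace ℝ E] where
  /-- the set of roots -/
  Φ : Finset E
  /-- the set of simple roots (a base) -/
  Δ : Finset E
  spanning : Submodule.span ℝ (Φ : Set E) = ⊤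
  zero_not_mem : (0 : E) ∉ Φ
  reduced : ∀ α ∈ Φ, ∀ t : ℝ, t • α ∈ Φ → t = 1 ∨ t = -1
  crystallographic : ∀ α ∈ Φ, ∀ β ∈ Φ, ∃ k : ℤ, 2 * ⟪β, α⟫ / ⟪α, α⟫ = (k : ℝ)
  reflection_mem : ∀ α ∈ Φ, ∀ β ∈ Φ, β - (2 * ⟪β, α⟫ / ⟪α, α⟫) • α ∈ Φ
  base_subset : Δ ⊆ Φ
  base_indep : LinearIndependent ℝ (fun a : {x : E // x ∈ Δ} => a.1)
  base_gen : ∀ β ∈ Φ, ∃ c : E → ℤ,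
      ((∀ α ∈ Δ, 0 ≤ c α) ∨ (∀ α ∈ Δ, c α ≤ 0)) ∧ β = ∑ α ∈ Δ, (c α : ℝ) • α

namespace RootSystemBase

variable {E : Type*} [NormedAddCommGroup E] [InnerProductSpace ℝ E]

-- The set `Φ⁺` of positive roots: the roots whose coefficients on the base `Δ`
-- are nonnegative integers.
open Classical in
noncomputable def posRoots (R : RootSystemBase E) : Finset E :=
  R.Φ.filter fun β => ∃ c : E → ℤ, (∀ α ∈ R.Δ, 0 ≤ c α) ∧ β = ∑ α ∈ R.Δ, (c α : ℝ) • α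

-- The Weyl vector `δ`, the half-sum of the positive roots.
noncomputable def weyl (R : RootSystemBase E) : E :=
  (1 / 2 : ℝ) • ∑ α ∈ R.posRoots, α

-- For a subset `I ⊆ Δ` of the simple roots, `δ_I` is the half-sum of the
-- positive roots not lying in the `ℤ`-span of `I`.
open Classical in
noncomputable def deltaI (R : RootSystemBase E) (I : Finset E) : E :=
  (1 / 2 : ℝ) • ∑ α ∈ R.posRoots.filter (fun β => β ∉ Submodule.span ℤ (I : Set E)), α

end RootSystemBase

/-!
`δ_I` is the orthogonal projection of `δ` onto the orthogonal complement of `I`. On the one hand,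
`δ - δ_I` is half the sum of the positive roots in `ℤI`. On the other hand, for `α ∈ I` the
reflection `s_α` changes only the `α`-coefficient of a root. A positive root outside `ℤI` has a
positive coefficient at some simple root other than `α`, so its image is again positive and outside
`ℤI`. Thus `s_α` permutes these roots and fixes `δ_I`, that is, `δ_I` is orthogonal to `α`.
Therefore `⟨δ, δ_I⟩ = ⟨δ_I, δ_I⟩`, and the rest is scaling.
-/

section

variable {ι K V : Type*} [Ring K] [PartialOrder K] [AddCommGroup V] [Module K V]

theorem sum_smul_eq_smul_of_sub_smul_nonpos {v : ι → V} {s : Finset ι} {c d : ι → K} {j : ι}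
    {t : K} (hv : LinearIndepOn K v s) (hj : j ∈ s) (hc : ∀ i ∈ s, 0 ≤ c i)
    (hd : ∀ i ∈ s, d i ≤ 0) (h : ∑ i ∈ s, c i • v i - t • v j = ∑ i ∈ s, d i • v i) :
    ∑ i ∈ s, c i • v i = c j • v j := by
  classical
  have hsum : ∑ i ∈ s, c i • v i = ∑ i ∈ s, (d i + if i = j then t else 0) • v i := by
    simp only [add_smul, Finset.sum_add_distrib, ite_smul, zero_smul, Finset.sum_ite_eq', hj,
      if_true, ← h, sub_add_cancel]
  have hcoeff := linearIndepOn_finset_iffₛ.1 hv _ _ hsum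
  refine Finset.sum_eq_single_of_mem j hj fun i hi hij => ?_
  have hcd : c i = d i := by simpa only [hij, if_false, add_zero] using hcoeff i hi
  rw [le_antisymm (hcd ▸ hd i hi) (hc i hi), zero_smul]

variable {𝕜 E : Type*} [RCLike 𝕜] [NormedAddCommGroup E] [InnerProductSpace 𝕜 E]

theorem sum_mem_of_mapsTo_reflection (U : Submodule 𝕜 E) [U.HasOrthogonalProjection]
    {s : Finset E} (hs : Set.MapsTo U.reflection s s) : ∑ x ∈ s, x ∈ U := by
  rw [← Submodule.reflection_eq_self_iff, map_sum]
  exact Finset.sum_nbij' U.reflection U.reflection hs hs (fun x _ => U.reflection_reflection x)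
    (fun x _ => U.reflection_reflection x) fun _ _ => rfl

theorem reflection_orthogonal_singleton_apply (u v : E) :
    (𝕜 ∙ u)ᗮ.reflection v = v - (2 * inner 𝕜 u v / inner 𝕜 u u) • u := by
  rw [Submodule.reflection_orthogonal_apply, Submodule.reflection_singleton_apply,
    inner_self_eq_norm_sq_to_K, neg_sub, mul_div_assoc, mul_smul, ofNat_smul_eq_nsmul 𝕜]

end

namespace RootSystemBase

open Submodule

variable {E : Type*} [NormedAddCommGroup E] [InnerProductSpace ℝ E] (R : RootSystemBase E)
  {I : Finset E} {α β : E}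

theorem mem_posRoots : β ∈ R.posRoots ↔
    β ∈ R.Φ ∧ ∃ c : E → ℤ, (∀ α ∈ R.Δ, 0 ≤ c α) ∧ β = ∑ α ∈ R.Δ, (c α : ℝ) • α := by
  simp only [posRoots, Finset.mem_filter]

open Classical in
/-- The set `Φ⁺ \ ℤI` of positive roots outside the root subsystem spanned by `I`, whose half-sum
is `δ_I`. -/
noncomputable def posRootsOutside (I : Finset E) : Finset E :=
  R.posRoots.filter fun β => β ∉ span ℤ (I : Set E)

theorem mem_posRootsOutside :
    β ∈ R.posRootsOutside I ↔ β ∈ R.posRoots ∧ β ∉ span ℤ (I : Set E) := by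
  simp only [posRootsOutside, Finset.mem_filter]

theorem deltaI_eq_half_sum : R.deltaI I = (1 / 2 : ℝ) • ∑ β ∈ R.posRootsOutside I, β :=
  rfl

theorem exists_reflection_eq_sub_zsmul (hα : α ∈ R.Φ) (hβ : β ∈ R.Φ) :
    ∃ m : ℤ, (ℝ ∙ α)ᗮ.reflection β = β - m • α ∧ β - m • α ∈ R.Φ := by
  obtain ⟨m, hm⟩ := R.crystallographic α hα β hβ
  have hmem := R.reflection_mem α hα β hβ
  rw [hm, Int.cast_smul_eq_zsmul] at hmem
  refine ⟨m, ?_, hmem⟩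
  rw [reflection_orthogonal_singleton_apply, real_inner_comm, hm, Int.cast_smul_eq_zsmul]

theorem sub_zsmul_mem_posRoots (hα : α ∈ R.Δ) (hβ : β ∈ R.posRoots) (hβα : β ∉ span ℤ {α})
    {m : ℤ} (hm : β - m • α ∈ R.Φ) : β - m • α ∈ R.posRoots := by
  obtain ⟨-, c, hc, hβc⟩ := R.mem_posRoots.1 hβ
  obtain ⟨d, hd | hd, hβd⟩ := R.base_gen _ hm
  · exact R.mem_posRoots.2 ⟨hm, d, hd, hβd⟩
  · have hβ_eq : β = (c α : ℝ) • α := by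
      rw [hβc]
      refine sum_smul_eq_smul_of_sub_smul_nonpos (v := id) (c := fun γ => (c γ : ℝ))
        (d := fun γ => (d γ : ℝ)) (t := (m : ℝ)) R.base_indep hα
        (fun γ hγ => mod_cast hc γ hγ) (fun γ hγ => mod_cast hd γ hγ) ?_
      simpa only [id, ← hβc, Int.cast_smul_eq_zsmul ℝ m] using hβd
    exact absurd (mem_span_singleton.2 ⟨c α, by rw [← Int.cast_smul_eq_zsmul ℝ, ← hβ_eq]⟩) hβα

theorem mapsTo_reflection_posRootsOutside (hI : I ⊆ R.Δ) (hα : α ∈ I) :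
    Set.MapsTo (ℝ ∙ α)ᗮ.reflection (R.posRootsOutside I) (R.posRootsOutside I) := by
  intro β hβ
  obtain ⟨hβpos, hβI⟩ := R.mem_posRootsOutside.1 hβ
  have hαI : α ∈ span ℤ (I : Set E) := subset_span hα
  obtain ⟨m, hrefl, hm⟩ :=
    R.exists_reflection_eq_sub_zsmul (R.base_subset (hI hα)) (R.mem_posRoots.1 hβpos).1
  have hβα : β ∉ span ℤ {α} := fun h => hβI ((span_singleton_le_iff_mem _ _).2 hαI h)
  rw [hrefl]
  exact R.mem_posRootsOutside.2 ⟨R.sub_zsmul_mem_posRoots (hI hα) hβpos hβα hm,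
    fun h => hβI (((span ℤ (I : Set E)).sub_mem_iff_left (smul_mem _ m hαI)).1 h)⟩

theorem deltaI_mem_orthogonal_span (hI : I ⊆ R.Δ) : R.deltaI I ∈ (span ℝ (I : Set E))ᗮ := by
  have hortho : ∀ α ∈ I, R.deltaI I ∈ (ℝ ∙ α)ᗮ := fun α hα =>
    smul_mem _ _ (sum_mem_of_mapsTo_reflection _ (R.mapsTo_reflection_posRootsOutside hI hα))
  refine (isOrtho_span.2 ?_).symm (mem_span_singleton_self _)
  rintro α hα _ rfl
  exact mem_orthogonal_singleton_iff_inner_right.1 (hortho α hα)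

theorem weyl_sub_deltaI_mem_span : R.weyl - R.deltaI I ∈ span ℝ (I : Set E) := by
  classical
  have hsub : R.posRootsOutside I ⊆ R.posRoots := fun β hβ => (R.mem_posRootsOutside.1 hβ).1
  rw [weyl, deltaI_eq_half_sum, ← smul_sub, ← Finset.sum_sdiff_eq_sub hsub]
  refine smul_mem _ _ (sum_mem fun β hβ => ?_)
  obtain ⟨hβpos, hβout⟩ := Finset.mem_sdiff.1 hβ
  have hβI : β ∈ span ℤ (I : Set E) :=
    by_contra fun h => hβout (R.mem_posRootsOutside.2 ⟨hβpos, h⟩)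
  exact span_le_restrictScalars ℤ ℝ _ hβI

theorem inner_weyl_deltaI (hI : I ⊆ R.Δ) :
    ⟪R.weyl, R.deltaI I⟫ = ⟪R.deltaI I, R.deltaI I⟫ := by
  rw [← sub_eq_zero, ← inner_sub_left]
  exact inner_right_of_mem_orthogonal R.weyl_sub_deltaI_mem_span (R.deltaI_mem_orthogonal_span hI)

end RootSystemBase

theorem pairing_of_mu_general {E : Type*} [NormedAddCommGroup E] [InnerProductSpace ℝ E]
    (R : RootSystemBase E) (I : Finset E) (hI : I ⊆ R.Δ) (hne : R.deltaI I ≠ 0)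
    (t : ℝ) (ht : t ≠ 0) (μ : E) (hμ : μ = t • R.deltaI I) :
    2 * ⟪R.weyl, μ⟫ / ⟪μ, μ⟫ = 2 / t := by
  have hδδ : ⟪R.deltaI I, R.deltaI I⟫ ≠ 0 := inner_self_ne_zero.2 hne
  rw [hμ, real_inner_smul_left, real_inner_smul_right, real_inner_smul_right,
    R.inner_weyl_deltaI hI]
  field_simp

/-- Let `I ⊆ Δ` with `δ_I ≠ 0`, let `k, ℓ` be nonzero integers, and set
`μ := (2k/ℓ)·δ_I`. Then `2⟨δ, μ⟩/⟨μ, μ⟩ = ℓ/k`. -/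
theorem pairing_of_mu {E : Type*} [NormedAddCommGroup E]
    [InnerProductSpace ℝ E] [FiniteDimensional ℝ E]
    (R : RootSystemBase E) (I : Finset E) (hI : I ⊆ R.Δ) (hne : R.deltaI I ≠ 0)
    (k l : ℤ) (hk : k ≠ 0) (hl : l ≠ 0)
    (μ : E) (hμ : μ = ((2 * (k : ℝ)) / (l : ℝ)) • R.deltaI I) :
    2 * ⟪R.weyl, μ⟫ / ⟪μ, μ⟫ = (l : ℝ) / (k : ℝ) := by
  rw [pairing_of_mu_general R I hI hne _ (by positivity) μ hμ]
  field_simp
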